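/- arXiv:2212.13188 — 5 statements merged into one kernel-verified Lean document; each statement's English description precedes it below -/
import Mathlib

section
/- For every u ∈ ℝ^N such that 1 is not an eigenvalue of the matrix Θ·Λ_u, the equation V = G₊(u,V) has a unique solution V ∈ ℝ^N, and this solution satisfies V ≥ 0. -/
open Matrix

/-!
With `A = Θ Λ_u`, the equation is the fixed-point equation of `V ↦ (c + V A)⁺`, and positive parts
are 1-Lipschitz, so this map is a contraction for the vector-valued distance `|x - y|` with matrix
factor `A`. Summing `d ≤ d A` over all coordinates shows that a nonnegative such `d` is a left
eigenvector of the substochastic matrix `A` for the eigenvalue `1`, hence zero. This makes `1 - A`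
invertible and the solution `w` of `w = 1 + w A` positive, and in the sup norm weighted by `w` the
map is a contraction in the usual sense.
-/

variable {ι : Type*} [Fintype ι]

/-- A square matrix admitting no nonzero nonnegative row vector `d` with `d ≤ d A`. For a real
matrix with nonnegative entries this says that its spectral radius is less than `1`; this form is
used because estimates on differences of solutions produce exactly such vectors. -/
def SubinvariantFree {R : Type*} [Semiring R] [PartialOrder R] (A : Matrix ι ι R) : Prop :=
  ∀ d : ι → R, 0 ≤ d → d ≤ d ᵥ* A → d = 0

lemma exists_mulVec_eq_self_iff_exists_vecMul_eq_self {R : Type*} [CommRing R] [IsDomain R]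
    {A : Matrix ι ι R} : (∃ v ≠ 0, A *ᵥ v = v) ↔ ∃ v ≠ 0, v ᵥ* A = v := by
  classical
  have h := (exists_mulVec_eq_zero_iff (M := A - 1)).trans exists_vecMul_eq_zero_iff.symm
  simpa only [sub_mulVec, one_mulVec, vecMul_sub, vecMul_one, sub_eq_zero] using h

section OrderedRing

variable {R : Type*} [Ring R] [LinearOrder R] [IsStrictOrderedRing R]

lemma vecMul_le_vecMul_of_nonneg {κ : Type*} {A : Matrix ι κ R} (hA : ∀ i j, 0 ≤ A i j)
    {x y : ι → R} (hxy : x ≤ y) : x ᵥ* A ≤ y ᵥ* A :=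
  fun j => dotProduct_le_dotProduct_of_nonneg_right hxy fun i => hA i j

lemma abs_vecMul_le_abs_vecMul {κ : Type*} {A : Matrix ι κ R} (hA : ∀ i j, 0 ≤ A i j)
    (x : ι → R) : |x ᵥ* A| ≤ |x| ᵥ* A :=
  abs_le'.2 ⟨vecMul_le_vecMul_of_nonneg hA (le_abs_self x),
    neg_vecMul x A ▸ vecMul_le_vecMul_of_nonneg hA (neg_le_abs x)⟩

lemma eq_vecMul_of_le_vecMul_of_sum_le_one {A : Matrix ι ι R} (hrow : ∀ i, ∑ j, A i j ≤ 1)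
    {d : ι → R} (hd : 0 ≤ d) (hdA : d ≤ d ᵥ* A) : d = d ᵥ* A := by
  have hsum : ∑ j, (d ᵥ* A) j ≤ ∑ i, d i := calc
    ∑ j, (d ᵥ* A) j = ∑ i, d i * ∑ j, A i j := by
      simp only [vecMul, dotProduct, Finset.mul_sum]
      exact Finset.sum_comm
    _ ≤ ∑ i, d i := Finset.sum_le_sum fun i _ => mul_le_of_le_one_right (hd i) (hrow i)
  have hcoord := (Finset.sum_eq_sum_iff_of_le fun i _ => hdA i).1
    ((Finset.sum_le_sum fun i _ => hdA i).antisymm hsum)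
  exact funext fun i => hcoord i (Finset.mem_univ i)

end OrderedRing

lemma subinvariantFree_of_sum_le_one {R : Type*} [CommRing R] [LinearOrder R]
    [IsStrictOrderedRing R] {A : Matrix ι ι R} (hrow : ∀ i, ∑ j, A i j ≤ 1)
    (heig : ¬∃ v ≠ 0, A *ᵥ v = v) : SubinvariantFree A := by
  intro d hd hdA
  by_contra hne
  exact heig (exists_mulVec_eq_self_iff_exists_vecMul_eq_self.2
    ⟨d, hne, (eq_vecMul_of_le_vecMul_of_sum_le_one hrow hd hdA).symm⟩)

namespace SubinvariantFree

variable {K : Type*} [Field K] [LinearOrder K] [IsStrictOrderedRing K] {A : Matrix ι ι K}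

lemma exists_eq_add_vecMul (h : SubinvariantFree A) (hA : ∀ i j, 0 ≤ A i j) (b : ι → K) :
    ∃ w, w = b + w ᵥ* A := by
  classical
  have hdet : (1 - A).det ≠ 0 := by
    intro hdet
    obtain ⟨v, hv, hvA⟩ := exists_vecMul_eq_zero_iff.2 hdet
    rw [vecMul_sub, vecMul_one, sub_eq_zero] at hvA
    have habs : |v| ≤ |v| ᵥ* A := by
      simpa only [← hvA] using abs_vecMul_le_abs_vecMul hA v
    have hzero := h |v| (abs_nonneg v) habs
    exact hv (funext fun i => abs_eq_zero.1 (congrFun hzero i))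
  obtain ⟨w, hw⟩ := vecMul_surjective_iff_isUnit.2
    ((isUnit_iff_isUnit_det (1 - A)).2 hdet.isUnit) b
  have hw : w ᵥ* (1 - A) = b := hw
  rw [vecMul_sub, vecMul_one, sub_eq_iff_eq_add] at hw
  exact ⟨w, hw⟩

lemma nonneg_of_eq_add_vecMul (h : SubinvariantFree A) (hA : ∀ i j, 0 ≤ A i j) {b w : ι → K}
    (hb : 0 ≤ b) (hw : w = b + w ᵥ* A) : 0 ≤ w := by
  have habs : |w| ≤ b + |w| ᵥ* A := calc
    |w| = |b + w ᵥ* A| := congrArg abs hw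
    _ ≤ |b| + |w ᵥ* A| := abs_add_le b _
    _ ≤ b + |w| ᵥ* A := add_le_add (abs_of_nonneg hb).le (abs_vecMul_le_abs_vecMul hA w)
  have hdefect : |w| - w ≤ (|w| - w) ᵥ* A := calc
    |w| - w ≤ (b + |w| ᵥ* A) - (b + w ᵥ* A) := sub_le_sub habs hw.ge
    _ = (|w| - w) ᵥ* A := by rw [sub_vecMul, add_sub_add_left_eq_sub]
  have hzero := h _ (sub_nonneg.2 (le_abs_self w)) hdefect
  exact sub_eq_zero.1 hzero ▸ abs_nonneg w

lemma exists_pos_vecMul_lt (h : SubinvariantFree A) (hA : ∀ i j, 0 ≤ A i j) :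
    ∃ w : ι → K, (∀ i, 0 < w i) ∧ ∀ i, (w ᵥ* A) i < w i := by
  obtain ⟨w, hw⟩ := h.exists_eq_add_vecMul hA 1
  have hlt (i : ι) : (w ᵥ* A) i < w i := by
    rw [congrFun hw i]
    exact lt_one_add _
  have hw0 : 0 ≤ w := h.nonneg_of_eq_add_vecMul hA zero_le_one hw
  have hwA : 0 ≤ w ᵥ* A := by
    simpa only [zero_vecMul] using vecMul_le_vecMul_of_nonneg hA hw0
  exact ⟨w, fun i => (hwA i).trans_lt (hlt i), hlt⟩

end SubinvariantFree

lemma exists_le_smul_of_forall_lt {κ : Type*} [Finite κ] {v w : κ → ℝ} (hw : ∀ i, 0 < w i)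
    (hvw : ∀ i, v i < w i) : ∃ r : NNReal, r < 1 ∧ v ≤ (r : ℝ) • w := by
  have := Fintype.ofFinite κ
  let ratio (i : κ) : NNReal := (v i / w i).toNNReal
  refine ⟨Finset.univ.sup ratio, (Finset.sup_lt_iff zero_lt_one).2 fun i _ => ?_, fun i => ?_⟩
  · exact Real.toNNReal_lt_one.2 ((div_lt_one (hw i)).2 (hvw i))
  · have hratio : ratio i ≤ Finset.univ.sup ratio := Finset.le_sup (Finset.mem_univ i)
    exact (div_le_iff₀ (hw i)).1 (Real.toNNReal_le_iff_le_coe.1 hratio)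

lemma abs_mul_sub_mul_le_dist_smul {w : ι → ℝ} (hw : 0 ≤ w) (y z : ι → ℝ) :
    |w * y - w * z| ≤ dist y z • w := by
  intro i
  calc |w i * y i - w i * z i| = dist (y i) (z i) * w i := by
        rw [← mul_sub, abs_mul, abs_of_nonneg (hw i), Real.dist_eq, mul_comm]
    _ ≤ dist y z * w i := mul_le_mul_of_nonneg_right (dist_le_pi_dist y z i) (hw i)

variable {A : Matrix ι ι ℝ}

lemma contractingWith_rescale (hA : ∀ i j, 0 ≤ A i j) {w : ι → ℝ} (hw : ∀ i, 0 < w i)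
    {r : NNReal} (hr : r < 1) (hwA : w ᵥ* A ≤ (r : ℝ) • w) {F : (ι → ℝ) → ι → ℝ}
    (hF : ∀ x y, |F x - F y| ≤ |x - y| ᵥ* A) :
    ContractingWith r fun y => F (w * y) / w := by
  refine ⟨hr, .of_dist_le_mul fun y z => (dist_pi_le_iff (by positivity)).2 fun i => ?_⟩
  have hFw : |F (w * y) - F (w * z)| ≤ (r * dist y z) • w := calc
    |F (w * y) - F (w * z)| ≤ |w * y - w * z| ᵥ* A := hF _ _
    _ ≤ (dist y z • w) ᵥ* A :=
      vecMul_le_vecMul_of_nonneg hA (abs_mul_sub_mul_le_dist_smul (fun i => (hw i).le) y z)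
    _ = dist y z • (w ᵥ* A) := smul_vecMul _ _ _
    _ ≤ dist y z • ((r : ℝ) • w) := smul_le_smul_of_nonneg_left hwA dist_nonneg
    _ = (r * dist y z) • w := by rw [smul_smul, mul_comm]
  calc dist (F (w * y) i / w i) (F (w * z) i / w i)
      = |F (w * y) i - F (w * z) i| / w i := by
        rw [Real.dist_eq, ← sub_div, abs_div, abs_of_pos (hw i)]
    _ ≤ r * dist y z := (div_le_iff₀ (hw i)).2 (hFw i)

/-- Perov's fixed-point theorem on `ℝ^ι`. -/
theorem SubinvariantFree.existsUnique_isFixedPt (h : SubinvariantFree A) (hA : ∀ i j, 0 ≤ A i j)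
    {F : (ι → ℝ) → ι → ℝ} (hF : ∀ x y, |F x - F y| ≤ |x - y| ᵥ* A) :
    ∃! x, Function.IsFixedPt F x := by
  obtain ⟨w, hw, hwA⟩ := h.exists_pos_vecMul_lt hA
  obtain ⟨r, hr, hrw⟩ := exists_le_smul_of_forall_lt hw hwA
  have hG := contractingWith_rescale hA hw hr hrw hF
  have hmul_div (x : ι → ℝ) : w * (x / w) = x := funext fun i => mul_div_cancel₀ (x i) (hw i).ne'
  refine ⟨w * hG.fixedPoint, ?_, fun x hx => ?_⟩
  · have hfix := hG.fixedPoint_isFixedPt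
    exact (hmul_div _).symm.trans (congrArg (w * ·) hfix)
  · have hfix : Function.IsFixedPt (fun y => F (w * y) / w) (x / w) := by
      rw [Function.IsFixedPt, hmul_div, hx]
    rw [← hG.fixedPoint_unique hfix, hmul_div]

lemma SubinvariantFree.existsUnique_posPart_add_vecMul_eq (h : SubinvariantFree A)
    (hA : ∀ i j, 0 ≤ A i j) (c : ι → ℝ) : ∃! x, (c + x ᵥ* A)⁺ = x := by
  refine h.existsUnique_isFixedPt hA fun x y => ?_
  calc |(c + x ᵥ* A)⁺ - (c + y ᵥ* A)⁺| ≤ |(c + x ᵥ* A) - (c + y ᵥ* A)| :=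
        abs_sup_sub_sup_le_abs _ _ 0
    _ = |(x - y) ᵥ* A| := by rw [add_sub_add_left_eq_sub, sub_vecMul]
    _ ≤ |x - y| ᵥ* A := abs_vecMul_le_abs_vecMul hA _

lemma posPart_add_transpose_mulVec_mul {κ R : Type*} [Fintype κ] [DecidableEq κ] [CommRing R]
    [LinearOrder R] [IsStrictOrderedRing R] (A : Matrix ι κ R) {s : κ → R} (hs : 0 ≤ s)
    (c : κ → R) (x : ι → R) : (c + Aᵀ *ᵥ x)⁺ * s = (c * s + x ᵥ* (A * diagonal s))⁺ := by
  ext i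
  simp only [Pi.mul_apply, Pi.add_apply, mulVec_transpose, ← vecMul_vecMul, vecMul_diagonal,
    ← add_mul, posPart_def, Pi.sup_apply, Pi.zero_apply]
  rw [max_mul_of_nonneg _ _ (hs i), zero_mul]

theorem stmt1_general [DecidableEq ι] (c s : ι → ℝ) (hs₀ : 0 ≤ s) (hs₁ : s ≤ 1)
    (Th : Matrix ι ι ℝ) (hTh : ∀ i j, 0 ≤ Th i j) (hThrow : ∀ i, ∑ j, Th i j ≤ 1)
    (heig : ¬∃ v : ι → ℝ, v ≠ 0 ∧ (Th * diagonal s) *ᵥ v = v) :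
    ∃ V : ι → ℝ, (V = (c + Thᵀ *ᵥ V)⁺ * s ∧ 0 ≤ V) ∧
      ∀ W : ι → ℝ, W = (c + Thᵀ *ᵥ W)⁺ * s → W = V := by
  have hA (i j) : 0 ≤ (Th * diagonal s) i j := by
    rw [mul_diagonal]
    exact mul_nonneg (hTh i j) (hs₀ j)
  have hrow (i) : ∑ j, (Th * diagonal s) i j ≤ 1 := by
    refine (Finset.sum_le_sum fun j _ => ?_).trans (hThrow i)
    rw [mul_diagonal]
    exact mul_le_of_le_one_right (hTh i j) (hs₁ j)
  have hfree := subinvariantFree_of_sum_le_one hrow heig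
  obtain ⟨V, hV, huniq⟩ := hfree.existsUnique_posPart_add_vecMul_eq hA (c * s)
  simp only [posPart_add_transpose_mulVec_mul Th hs₀]
  exact ⟨V, ⟨hV.symm, hV ▸ posPart_nonneg _⟩, fun W hW => huniq W hW.symm⟩

/-- For every `u ∈ ℝ^N` such that `1` is not an eigenvalue of `Θ·Λ_u`,
the equation `V = G₊(u,V)` has a unique solution `V ∈ ℝ^N`, and this solution
satisfies `V ≥ 0`, where `G₊(u,V) := (e + Π'u + Θ'V − l)⁺ ∘ 1_{u=l}`. -/
theorem stmt1 (N : ℕ) (hN : 1 < N)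
    (e l : Fin N → ℝ) (he : 0 ≤ e) (hl : 0 ≤ l)
    (P Th : Matrix (Fin N) (Fin N) ℝ)
    (hP : ∀ i j, 0 ≤ P i j) (hProw : ∀ i, ∑ j, P i j = 1)
    (hTh : ∀ i j, 0 ≤ Th i j) (hThrow : ∀ i, ∑ j, Th i j ≤ 1)
    (u : Fin N → ℝ)
    (heig : ¬ ∃ v : Fin N → ℝ, v ≠ 0 ∧
      (Th * Matrix.diagonal (fun i => if u i = l i then (1 : ℝ) else 0)).mulVec v = v) :
    ∃ V : Fin N → ℝ,
      (V = (fun i =>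
          max (e i + P.transpose.mulVec u i + Th.transpose.mulVec V i - l i) 0 *
            (if u i = l i then (1 : ℝ) else 0)) ∧ 0 ≤ V) ∧
      ∀ W : Fin N → ℝ,
        W = (fun i =>
          max (e i + P.transpose.mulVec u i + Th.transpose.mulVec W i - l i) 0 *
            (if u i = l i then (1 : ℝ) else 0)) → W = V := by
  simpa only [funext_iff, Pi.mul_apply, Pi.add_apply, Pi.sub_apply, posPart_def, Pi.sup_apply,
    Pi.zero_apply, sub_add_eq_add_sub] using stmt1_general (e + Pᵀ *ᵥ u - l) _
      (fun _ => ite_nonneg zero_le_one le_rfl) (fun _ => ite_le_one le_rfl zero_le_one) Th hTh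
      hThrow heig
end

section
/- The map H is monotone on [0,l]: if p, p' ∈ [0,l] and p ≤ p' componentwise, then H(p) ≤ H(p'); moreover H(p) ≥ 0 for every p ∈ [0,l]. -/
open Matrix

/-!
Raising `u` within `[0, l]` raises the map `G₊(u, ·)`, so for `p ≤ p'` the solution `H p'` is a
pre-fixed point of the monotone map `G₊(p, ·)`. By Knaster–Tarski that map has a fixed point in the
order interval `[0, H p']`, and `H p`, as the least fixed point of `G₊(p, ·)`, lies below it.
-/

open Function (fixedPoints IsFixedPt)

theorem exists_isFixedPt_mem_Icc_of_monotoneOn {α : Type*} [ConditionallyCompleteLattice α]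
    {f : α → α} {a b : α} (hab : a ≤ b) (hf : MonotoneOn f (Set.Icc a b)) (ha : a ≤ f a)
    (hb : f b ≤ b) : ∃ x ∈ Set.Icc a b, IsFixedPt f x := by
  have : Fact (a ≤ b) := ⟨hab⟩
  have maps_Icc : Set.MapsTo f (Set.Icc a b) (Set.Icc a b) := fun x hx =>
    ⟨ha.trans (hf (Set.left_mem_Icc.2 hab) hx hx.1),
      (hf hx (Set.right_mem_Icc.2 hab) hx.2).trans hb⟩
  let g : Set.Icc a b →o Set.Icc a b := ⟨maps_Icc.restrict, fun x y hxy => hf x.2 y.2 hxy⟩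
  exact ⟨g.lfp, g.lfp.2, congrArg Subtype.val g.map_lfp⟩

theorem monotone_mulVec_of_nonneg {m n R : Type*} [Fintype n] [Semiring R]
    [PartialOrder R] [IsOrderedRing R] {A : Matrix m n R} (hA : ∀ i j, 0 ≤ A i j) :
    Monotone fun v => A *ᵥ v :=
  fun _ _ hvw i => dotProduct_le_dotProduct_of_nonneg_left hvw (hA i)

theorem ite_eq_le_ite_eq_of_le_of_le {α R : Type*} [PartialOrder α] [DecidableEq α] [Zero R] [One R]
    [Preorder R] [ZeroLEOneClass R] {a b c : α} (hab : a ≤ b) (hbc : b ≤ c) :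
    (if a = c then (1 : R) else 0) ≤ if b = c then 1 else 0 := by
  by_cases hac : a = c
  · rw [if_pos hac, if_pos (hbc.antisymm (hac ▸ hab))]
  · rw [if_neg hac]
    split_ifs
    exacts [zero_le_one, le_rfl]

section SurplusMap

variable {ι : Type*} [Fintype ι] {e l : ι → ℝ} {P Th : Matrix ι ι ℝ}

/-- The map `G₊(u, V) = (e + Π'u + Θ'V − l)⁺ ∘ 1_{u = l}`, whose fixed points in `V` are the
solutions of the equation defining `H(u)`; `P` and `Th` stand for `Π` and `Θ`. -/
noncomputable def surplusMap (e l : ι → ℝ) (P Th : Matrix ι ι ℝ) (u V : ι → ℝ) : ι → ℝ := fun i =>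
  max (e i + (Pᵀ *ᵥ u) i + (Thᵀ *ᵥ V) i - l i) 0 * (if u i = l i then (1 : ℝ) else 0)

theorem surplusMap_nonneg (u V : ι → ℝ) : 0 ≤ surplusMap e l P Th u V := fun _ =>
  mul_nonneg (le_max_right _ _) (ite_nonneg zero_le_one le_rfl)

theorem surplusMap_le_surplusMap (hP : ∀ i j, 0 ≤ P i j) (hTh : ∀ i j, 0 ≤ Th i j)
    {u u' V V' : ι → ℝ} (hu : u ≤ u') (hu' : u' ≤ l) (hV : V ≤ V') :
    surplusMap e l P Th u V ≤ surplusMap e l P Th u' V' := by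
  intro i
  have hPu : (Pᵀ *ᵥ u) i ≤ (Pᵀ *ᵥ u') i := monotone_mulVec_of_nonneg (fun i j => hP j i) hu i
  have hThV : (Thᵀ *ᵥ V) i ≤ (Thᵀ *ᵥ V') i := monotone_mulVec_of_nonneg (fun i j => hTh j i) hV i
  exact mul_le_mul (max_le_max_right 0 (by gcongr)) (ite_eq_le_ite_eq_of_le_of_le (hu i) (hu' i))
    (ite_nonneg zero_le_one le_rfl) (le_max_right _ _)

theorem nonneg_of_isFixedPt_surplusMap {u V : ι → ℝ} (hV : IsFixedPt (surplusMap e l P Th u) V) :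
    0 ≤ V :=
  (surplusMap_nonneg u V).trans_eq hV

theorem exists_isFixedPt_surplusMap_le (hP : ∀ i j, 0 ≤ P i j) (hTh : ∀ i j, 0 ≤ Th i j)
    {u u' V' : ι → ℝ} (hu : u ≤ u') (hu' : u' ≤ l) (hV' : IsFixedPt (surplusMap e l P Th u') V') :
    ∃ V, IsFixedPt (surplusMap e l P Th u) V ∧ V ≤ V' := by
  have monotone_surplusMap : Monotone (surplusMap e l P Th u) := fun _ _ hVW =>
    surplusMap_le_surplusMap hP hTh le_rfl (hu.trans hu') hVW
  have map_le : surplusMap e l P Th u V' ≤ V' :=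
    (surplusMap_le_surplusMap hP hTh hu hu' le_rfl).trans_eq hV'
  obtain ⟨V, ⟨-, hVV'⟩, hV⟩ := exists_isFixedPt_mem_Icc_of_monotoneOn
    (nonneg_of_isFixedPt_surplusMap hV') (monotone_surplusMap.monotoneOn _)
    (surplusMap_nonneg u 0) map_le
  exact ⟨V, hV, hVV'⟩

theorem stmt2_general (hP : ∀ i j, 0 ≤ P i j) (hTh : ∀ i j, 0 ≤ Th i j) {s : Set (ι → ℝ)}
    (hs : s ⊆ Set.Iic l) {H : (ι → ℝ) → ι → ℝ}
    (hH : ∀ u ∈ s, IsLeast (fixedPoints (surplusMap e l P Th u)) (H u)) :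
    MonotoneOn H s ∧ ∀ p ∈ s, 0 ≤ H p := by
  refine ⟨fun p hp p' hp' hpp' => ?_, fun p hp => nonneg_of_isFixedPt_surplusMap (hH p hp).1⟩
  obtain ⟨V, hV, hVH⟩ := exists_isFixedPt_surplusMap_le hP hTh hpp' (hs hp') (hH p' hp').1
  exact ((hH p hp).2 hV).trans hVH

end SurplusMap

/-- The map `H` (the unique solution of `V = G₊(u,V)` for `u ∈ [0,l]`)
is monotone on `[0,l]`: if `p, p' ∈ [0,l]` and `p ≤ p'` componentwise, then
`H(p) ≤ H(p')`; moreover `H(p) ≥ 0` for every `p ∈ [0,l]`. -/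
theorem stmt2 (N : ℕ) (hN : 1 < N)
    (e l : Fin N → ℝ) (he : 0 ≤ e) (hl : 0 ≤ l)
    (P Th : Matrix (Fin N) (Fin N) ℝ)
    (hP : ∀ i j, 0 ≤ P i j) (hProw : ∀ i, ∑ j, P i j = 1)
    (hTh : ∀ i j, 0 ≤ Th i j) (hThrow : ∀ i, ∑ j, Th i j ≤ 1)
    (Gp : (Fin N → ℝ) → (Fin N → ℝ) → Fin N → ℝ)
    (hGp : Gp = fun u V i =>
      max (e i + P.transpose.mulVec u i + Th.transpose.mulVec V i - l i) 0 *
        (if u i = l i then (1 : ℝ) else 0))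
    (H : (Fin N → ℝ) → Fin N → ℝ)
    (hH : ∀ u ∈ Set.Icc (0 : Fin N → ℝ) l,
      H u = Gp u (H u) ∧ ∀ W : Fin N → ℝ, W = Gp u W → W = H u) :
    (∀ p p' : Fin N → ℝ, p ∈ Set.Icc (0 : Fin N → ℝ) l →
      p' ∈ Set.Icc (0 : Fin N → ℝ) l → p ≤ p' → H p ≤ H p') ∧
    (∀ p ∈ Set.Icc (0 : Fin N → ℝ) l, 0 ≤ H p) := by
  subst hGp
  exact (stmt2_general hP hTh (fun _ hu => hu.2) fun u hu =>
    ⟨(hH u hu).1.symm, fun W hW => ((hH u hu).2 W hW.symm).ge⟩).imp_left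
      fun hmono _ _ hp hp' => hmono hp hp'
end

section
/- For every p ∈ [0,l] and every V ∈ ℝ^N with 0 ≤ V ≤ K, one has 0 ≤ G₊(p,V) ≤ K; in particular, for each p ∈ [0,l] the monotone map V ↦ G₊(p,V) maps the order interval [0,K] into itself. -/
/-!
The map `G₊` is nonnegative by construction, and it is monotone in both arguments on `u ≤ l`: since
`l` caps `u`, increasing `u` can only enlarge the set of coordinates with `uⁱ = lⁱ`. Hence
`G₊(p, V) ≤ G₊(l, K) = (e + Π'l + Θ'K − l)⁺`. The vector `K` solves `K = (e + Π'l − l)⁺ + Θ'K`, so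
it dominates `e + Π'l + Θ'K − l`; as `0 ≤ V ≤ K`, it dominates the positive part as well.
-/

open Matrix

section Resolvent

variable {n R : Type*} [Fintype n] [DecidableEq n] [CommRing R]

theorem inv_one_sub_mulVec_eq_add {A : Matrix n n R} (hA : IsUnit (1 - A)) (b : n → R) :
    (1 - A)⁻¹ *ᵥ b = b + A *ᵥ ((1 - A)⁻¹ *ᵥ b) := by
  have hdet : IsUnit (1 - A).det := (isUnit_iff_isUnit_det _).mp hA
  have hsub : (1 - A)⁻¹ *ᵥ b - A *ᵥ ((1 - A)⁻¹ *ᵥ b) = b :=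
    calc (1 - A)⁻¹ *ᵥ b - A *ᵥ ((1 - A)⁻¹ *ᵥ b)
        = (1 - A) *ᵥ ((1 - A)⁻¹ *ᵥ b) := by rw [sub_mulVec, one_mulVec]
      _ = b := by rw [mulVec_mulVec, mul_nonsing_inv _ hdet, one_mulVec]
  exact sub_eq_iff_eq_add.mp hsub

end Resolvent

theorem mulVec_monotone_of_nonneg {m n R : Type*} [Fintype n] [Semiring R] [PartialOrder R]
    [IsOrderedRing R] {A : Matrix m n R} (hA : ∀ i j, 0 ≤ A i j) : Monotone (A *ᵥ ·) :=
  fun _ _ hvw i => dotProduct_le_dotProduct_of_nonneg_left hvw (hA i)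

section Clearing

variable {n R : Type*} [Fintype n]

/-- The vector `e + Π'u + Θ'V − l`: the net worth of each firm with external assets `e` and
liabilities `l`, when the firms pay `u` (shared out by `P = Π`) and have equities `V` (cross-held
according to `Θ`). -/
def netWorth [Ring R] (e l : n → R) (P Θ : Matrix n n R) (u V : n → R) : n → R :=
  e + Pᵀ *ᵥ u + Θᵀ *ᵥ V - l

/-- The map `G₊(u, V) = (e + Π'u + Θ'V − l)⁺ ∘ 1_{u = l}`: the equity of the firms that pay their
liabilities in full. The Hadamard product with `1_{u = l}` is encoded as an indicator function on
the index type. -/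
noncomputable def solventEquity [Ring R] [Lattice R] (e l : n → R) (P Θ : Matrix n n R)
    (u V : n → R) : n → R :=
  {i | u i = l i}.indicator (netWorth e l P Θ u V)⁺

section Ring

variable [Ring R] [Lattice R] {e l u u' V V' K : n → R} {P Θ : Matrix n n R}

theorem solventEquity_apply_eq_mul [DecidableEq R] (V : n → R) (i : n) :
    solventEquity e l P Θ u V i =
      ((e i + (Pᵀ *ᵥ u) i + (Θᵀ *ᵥ V) i - l i) ⊔ 0) * (if u i = l i then 1 else 0) := by
  rw [mul_ite, mul_one, mul_zero]
  exact Set.indicator_apply _ _ _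

theorem solventEquity_nonneg : 0 ≤ solventEquity e l P Θ u V :=
  Set.indicator_nonneg fun i _ => posPart_nonneg (netWorth e l P Θ u V) i

theorem solventEquity_liabilities : solventEquity e l P Θ l V = (netWorth e l P Θ l V)⁺ := by
  simp only [solventEquity, Set.ofPred_true, Set.indicator_univ]

variable [IsOrderedRing R]

theorem netWorth_mono (hP : ∀ i j, 0 ≤ P i j) (hΘ : ∀ i j, 0 ≤ Θ i j) (hu : u ≤ u')
    (hV : V ≤ V') : netWorth e l P Θ u V ≤ netWorth e l P Θ u' V' := by
  have hPu : Pᵀ *ᵥ u ≤ Pᵀ *ᵥ u' := mulVec_monotone_of_nonneg (fun i j => hP j i) hu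
  have hΘV : Θᵀ *ᵥ V ≤ Θᵀ *ᵥ V' := mulVec_monotone_of_nonneg (fun i j => hΘ j i) hV
  unfold netWorth
  gcongr

theorem solventEquity_mono (hP : ∀ i j, 0 ≤ P i j) (hΘ : ∀ i j, 0 ≤ Θ i j) (hu : u ≤ u')
    (hu' : u' ≤ l) (hV : V ≤ V') : solventEquity e l P Θ u V ≤ solventEquity e l P Θ u' V' := by
  have hsolvent : {i | u i = l i} ⊆ {i | u' i = l i} :=
    fun i (hi : u i = l i) => (hu' i).antisymm (hi ▸ hu i)
  calc {i | u i = l i}.indicator (netWorth e l P Θ u V)⁺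
      ≤ {i | u i = l i}.indicator (netWorth e l P Θ u' V')⁺ :=
        Set.indicator_mono (posPart_mono (netWorth_mono hP hΘ hu hV))
    _ ≤ {i | u' i = l i}.indicator (netWorth e l P Θ u' V')⁺ :=
        Set.indicator_le_indicator_of_subset hsolvent (posPart_nonneg _)

theorem mapsTo_solventEquity_Icc (hP : ∀ i j, 0 ≤ P i j) (hΘ : ∀ i j, 0 ≤ Θ i j) (hu : u ≤ l)
    (hK : netWorth e l P Θ l K ≤ K) :
    Set.MapsTo (solventEquity e l P Θ u) (Set.Icc 0 K) (Set.Icc 0 K) := by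
  rintro V ⟨hV, hVK⟩
  refine ⟨solventEquity_nonneg, ?_⟩
  calc solventEquity e l P Θ u V
      ≤ solventEquity e l P Θ l K := solventEquity_mono hP hΘ hu le_rfl hVK
    _ = (netWorth e l P Θ l K)⁺ := solventEquity_liabilities
    _ ≤ K := sup_le hK (hV.trans hVK)

end Ring

variable [DecidableEq n] [CommRing R] [Lattice R] [IsOrderedRing R]
  {e l u : n → R} {P Θ : Matrix n n R}

theorem netWorth_inv_one_sub_mulVec_le (hΘ : IsUnit (1 - Θᵀ)) :
    netWorth e l P Θ l ((1 - Θᵀ)⁻¹ *ᵥ (e + Pᵀ *ᵥ l - l)⁺) ≤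
      (1 - Θᵀ)⁻¹ *ᵥ (e + Pᵀ *ᵥ l - l)⁺ := by
  set K := (1 - Θᵀ)⁻¹ *ᵥ (e + Pᵀ *ᵥ l - l)⁺
  calc netWorth e l P Θ l K
      = (e + Pᵀ *ᵥ l - l) + Θᵀ *ᵥ K := add_sub_right_comm _ _ _
    _ ≤ (e + Pᵀ *ᵥ l - l)⁺ + Θᵀ *ᵥ K := by gcongr; exact le_posPart _
    _ = K := (inv_one_sub_mulVec_eq_add hΘ _).symm

theorem stmt3_general (hP : ∀ i j, 0 ≤ P i j) (hΘ : ∀ i j, 0 ≤ Θ i j) (hInv : IsUnit (1 - Θᵀ))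
    (hu : u ≤ l) :
    Set.MapsTo (solventEquity e l P Θ u)
      (Set.Icc 0 ((1 - Θᵀ)⁻¹ *ᵥ (e + Pᵀ *ᵥ l - l)⁺))
      (Set.Icc 0 ((1 - Θᵀ)⁻¹ *ᵥ (e + Pᵀ *ᵥ l - l)⁺)) :=
  mapsTo_solventEquity_Icc hP hΘ hu (netWorth_inv_one_sub_mulVec_le hInv)

end Clearing

/-- With `K := (I − Θ')⁻¹ (e + Π'l − l)⁺`, for every `p ∈ [0,l]` and every
`V ∈ ℝ^N` with `0 ≤ V ≤ K`, one has `0 ≤ G₊(p,V) ≤ K`; in particular, for each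
`p ∈ [0,l]` the monotone map `V ↦ G₊(p,V)` maps the order interval `[0,K]` into
itself. -/
theorem stmt3 (N : ℕ) (hN : 1 < N)
    (e l : Fin N → ℝ) (he : 0 ≤ e) (hl : 0 ≤ l)
    (P Th : Matrix (Fin N) (Fin N) ℝ)
    (hP : ∀ i j, 0 ≤ P i j) (hProw : ∀ i, ∑ j, P i j = 1)
    (hTh : ∀ i j, 0 ≤ Th i j) (hThrow : ∀ i, ∑ j, Th i j ≤ 1)
    (hInv : IsUnit (1 - Th.transpose))
    (hInvNonneg : ∀ i j, 0 ≤ (1 - Th.transpose)⁻¹ i j)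
    (Gp : (Fin N → ℝ) → (Fin N → ℝ) → Fin N → ℝ)
    (hGp : Gp = fun u V i =>
      max (e i + P.transpose.mulVec u i + Th.transpose.mulVec V i - l i) 0 *
        (if u i = l i then (1 : ℝ) else 0))
    (K : Fin N → ℝ)
    (hK : K = (1 - Th.transpose)⁻¹.mulVec
      (fun i => max (e i + P.transpose.mulVec l i - l i) 0)) :
    ∀ p ∈ Set.Icc (0 : Fin N → ℝ) l, ∀ V : Fin N → ℝ,
      0 ≤ V → V ≤ K → 0 ≤ Gp p V ∧ Gp p V ≤ K := by
  have hGp' : Gp = solventEquity e l P Th := by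
    ext u V i
    rw [hGp, solventEquity_apply_eq_mul]
  subst hGp' hK
  exact fun p hp V hV hVK => stmt3_general hP hTh hInv hp.2 ⟨hV, hVK⟩
end

section
/- The map (b,p) ↦ F_b(p) maps {0,1}^N × [0,l] into [0,l] and is monotone with respect to the componentwise orderings: if b ≤ b' in {0,1}^N and p ≤ p' in [0,l], then F_b(p) ≤ F_{b'}(p'). -/
open Matrix

/-!
The equity map `G₊(u, ·)` takes nonnegative values and increases both with its argument and with
`u ≤ l`. Hence, for `u ≤ u' ≤ l`, a fixed point of `G₊(u', ·)` is a point which `G₊(u, ·)` moves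
down; by the Knaster–Tarski theorem on the order interval below it, it lies above the least fixed
point `H(u)` of `G₊(u, ·)`. So `H` is nonnegative and increasing, and therefore so are `x(p, H(p))`
and `y(p, H(p))`, with `y ≤ x`. The rest is a comparison of real numbers in each coordinate.
-/

section OrderTheory

variable {L : Type*}

theorem exists_isFixedPt_mem_Icc [ConditionallyCompleteLattice L] {f : L → L} {a b : L}
    (hf : MonotoneOn f (Set.Icc a b)) (hab : a ≤ b) (ha : a ≤ f a) (hb : f b ≤ b) :
    ∃ x ∈ Set.Icc a b, Function.IsFixedPt f x := by
  have : Fact (a ≤ b) := ⟨hab⟩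
  have hmaps : ∀ x ∈ Set.Icc a b, f x ∈ Set.Icc a b := fun x hx =>
    ⟨ha.trans (hf (Set.left_mem_Icc.2 hab) hx hx.1),
      (hf hx (Set.right_mem_Icc.2 hab) hx.2).trans hb⟩
  let g : Set.Icc a b →o Set.Icc a b :=
    ⟨fun x => ⟨f x, hmaps x x.2⟩, fun x y hxy => hf x.2 y.2 hxy⟩
  exact ⟨g.lfp, g.lfp.2, congrArg Subtype.val g.map_lfp⟩

theorem le_of_mem_lowerBounds_fixedPoints [ConditionallyCompleteLattice L] {f : L → L} {a b x : L}
    (hx : x ∈ lowerBounds (Function.fixedPoints f)) (hf : MonotoneOn f (Set.Icc a b))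
    (hab : a ≤ b) (ha : a ≤ f a) (hb : f b ≤ b) : x ≤ b := by
  obtain ⟨w, hw, hfw⟩ := exists_isFixedPt_mem_Icc hf hab ha hb
  exact (hx hfw).trans hw.2

/-- The payment of a single agent with assets `x`, recovered assets `y` and liabilities `l`.
For `b = false` (a coordinate of `Φ₀`) the recovered assets are paid up to `l`. For `b = true`
(a coordinate of `Φ₁`) they are paid if the agent defaults (`x < l`), and `l` is paid
otherwise. -/
def payment [LinearOrder L] (b : Bool) (x y l : L) : L :=
  if b then (if x < l then y else l) else min y l

variable [LinearOrder L] {b b' : Bool} {x x' y y' l z : L}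

theorem le_payment (hy : z ≤ y) (hl : z ≤ l) : z ≤ payment b x y l := by
  unfold payment
  split_ifs
  exacts [hy, hl, le_min hy hl]

theorem payment_le (hyx : y ≤ x) : payment b x y l ≤ l := by
  unfold payment
  split_ifs with _ hx
  exacts [hyx.trans hx.le, le_rfl, min_le_right y l]

theorem payment_false_le_payment_true : payment false x y l ≤ payment true x y l :=
  le_payment (min_le_left y l) (min_le_right y l)

theorem payment_mono_flag (hb : b ≤ b') : payment b x y l ≤ payment b' x y l := by
  cases b <;> cases b'
  exacts [le_rfl, payment_false_le_payment_true, absurd hb (by decide), le_rfl]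

theorem payment_mono_assets (hyx : y ≤ x) (hx : x ≤ x') (hy : y ≤ y') :
    payment b x y l ≤ payment b x' y' l := by
  cases b
  · exact min_le_min_right l hy
  · by_cases hdefault : x' < l
    · simpa only [payment, hdefault, hx.trans_lt hdefault, if_true] using hy
    · simpa only [payment, hdefault, if_true, if_false] using payment_le (b := true) hyx

end OrderTheory

section NonnegMatrix

variable {m n R : Type*} [Fintype n] [Semiring R] [PartialOrder R] [IsOrderedRing R]
  {A : Matrix m n R}

theorem monotone_mulVec_of_nonneg_s5 (hA : ∀ i j, 0 ≤ A i j) : Monotone (A *ᵥ ·) :=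
  fun _ _ huv i => dotProduct_le_dotProduct_of_nonneg_left huv (hA i)

theorem mulVec_nonneg_of_nonneg {v : n → R} (hA : ∀ i j, 0 ≤ A i j) (hv : 0 ≤ v) : 0 ≤ A *ᵥ v :=
  fun i => dotProduct_nonneg_of_nonneg (hA i) hv

end NonnegMatrix

section FinancialNetwork

variable {ι : Type*} [Fintype ι]

/-- The assets `x(p, V) = e + Π'p + Θ'V` of the agents when payments `p` are made and the equities
are `V`. -/
def totalAssets (e : ι → ℝ) (P Th : Matrix ι ι ℝ) (p V : ι → ℝ) : ι → ℝ :=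
  e + Pᵀ *ᵥ p + Thᵀ *ᵥ V

/-- The assets `y(p, V) = αe + βΠ'p + γΘ'V` which are left to the creditors after default, with
recovery rates `α`, `β`, `γ`. -/
def recoveredAssets (α β γ : ℝ) (e : ι → ℝ) (P Th : Matrix ι ι ℝ) (p V : ι → ℝ) : ι → ℝ :=
  α • e + β • Pᵀ *ᵥ p + γ • Thᵀ *ᵥ V

/-- The map `G₊(u, ·)`, whose fixed points are the equities compatible with the payments `u`. -/
noncomputable def equityMap (e l : ι → ℝ) (P Th : Matrix ι ι ℝ) (u V : ι → ℝ) : ι → ℝ :=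
  fun i => max (totalAssets e P Th u V i - l i) 0 * if u i = l i then 1 else 0

/-- The map `Φ_b(p, V)`, where `b i = true` selects `Φ₁` and `b i = false` selects `Φ₀` in
coordinate `i`. -/
noncomputable def clearingMap (α β γ : ℝ) (e l : ι → ℝ) (P Th : Matrix ι ι ℝ) (b : ι → Bool)
    (p V : ι → ℝ) : ι → ℝ := fun i =>
  let y := recoveredAssets α β γ e P Th p V i
  let d : ℝ := if totalAssets e P Th p V i < l i then 1 else 0
  if b i then y * d + l i * (1 - d) else min y (l i)

variable {α β γ : ℝ} {e l p p' u u' V V' : ι → ℝ} {P Th : Matrix ι ι ℝ} {b b' : ι → Bool}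

theorem totalAssets_mono (hP : ∀ i j, 0 ≤ P i j) (hTh : ∀ i j, 0 ≤ Th i j) (hp : p ≤ p')
    (hV : V ≤ V') : totalAssets e P Th p V ≤ totalAssets e P Th p' V' :=
  add_le_add (add_le_add le_rfl (monotone_mulVec_of_nonneg_s5 (fun i j => hP j i) hp))
    (monotone_mulVec_of_nonneg_s5 (fun i j => hTh j i) hV)

theorem recoveredAssets_mono (hβ : 0 ≤ β) (hγ : 0 ≤ γ) (hP : ∀ i j, 0 ≤ P i j)
    (hTh : ∀ i j, 0 ≤ Th i j) (hp : p ≤ p') (hV : V ≤ V') :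
    recoveredAssets α β γ e P Th p V ≤ recoveredAssets α β γ e P Th p' V' :=
  add_le_add
    (add_le_add le_rfl
      (smul_le_smul_of_nonneg_left (monotone_mulVec_of_nonneg_s5 (fun i j => hP j i) hp) hβ))
    (smul_le_smul_of_nonneg_left (monotone_mulVec_of_nonneg_s5 (fun i j => hTh j i) hV) hγ)

theorem recoveredAssets_nonneg (hα : 0 ≤ α) (hβ : 0 ≤ β) (hγ : 0 ≤ γ) (he : 0 ≤ e)
    (hP : ∀ i j, 0 ≤ P i j) (hTh : ∀ i j, 0 ≤ Th i j) (hp : 0 ≤ p) (hV : 0 ≤ V) :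
    0 ≤ recoveredAssets α β γ e P Th p V :=
  add_nonneg
    (add_nonneg (smul_nonneg hα he)
      (smul_nonneg hβ (mulVec_nonneg_of_nonneg (fun i j => hP j i) hp)))
    (smul_nonneg hγ (mulVec_nonneg_of_nonneg (fun i j => hTh j i) hV))

theorem recoveredAssets_le_totalAssets (hα : α ≤ 1) (hβ : β ≤ 1) (hγ : γ ≤ 1) (he : 0 ≤ e)
    (hP : ∀ i j, 0 ≤ P i j) (hTh : ∀ i j, 0 ≤ Th i j) (hp : 0 ≤ p) (hV : 0 ≤ V) :
    recoveredAssets α β γ e P Th p V ≤ totalAssets e P Th p V :=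
  add_le_add
    (add_le_add (smul_le_of_le_one_left he hα)
      (smul_le_of_le_one_left (mulVec_nonneg_of_nonneg (fun i j => hP j i) hp) hβ))
    (smul_le_of_le_one_left (mulVec_nonneg_of_nonneg (fun i j => hTh j i) hV) hγ)

theorem equityMap_nonneg : 0 ≤ equityMap e l P Th u V := fun _ =>
  mul_nonneg (le_max_right _ _) (by split_ifs <;> simp)

theorem equityMap_mono (hP : ∀ i j, 0 ≤ P i j) (hTh : ∀ i j, 0 ≤ Th i j) (hu : u ≤ u')
    (hu' : u' ≤ l) (hV : V ≤ V') : equityMap e l P Th u V ≤ equityMap e l P Th u' V' := by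
  intro i
  have hsurplus := max_le_max_right 0
    (sub_le_sub_right (totalAssets_mono (e := e) hP hTh hu hV i) (l i))
  have hindicator : (if u i = l i then (1 : ℝ) else 0) ≤ if u' i = l i then 1 else 0 := by
    by_cases h : u i = l i
    · rw [if_pos h, if_pos ((hu' i).antisymm (h ▸ hu i))]
    · rw [if_neg h]
      split_ifs <;> simp
  exact mul_le_mul hsurplus hindicator (by split_ifs <;> simp) (le_max_right _ _)

theorem le_of_equityMap_le (hP : ∀ i j, 0 ≤ P i j) (hTh : ∀ i j, 0 ≤ Th i j)
    (hu : u ≤ u') (hu' : u' ≤ l)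
    (hV : V ∈ lowerBounds (Function.fixedPoints (equityMap e l P Th u)))
    (hV' : equityMap e l P Th u' V' ≤ V') : V ≤ V' := by
  have hmono : Monotone (equityMap e l P Th u) := fun _ _ =>
    equityMap_mono hP hTh le_rfl (hu.trans hu')
  have hdown : equityMap e l P Th u V' ≤ V' := (equityMap_mono hP hTh hu hu' le_rfl).trans hV'
  exact le_of_mem_lowerBounds_fixedPoints hV (hmono.monotoneOn _) (equityMap_nonneg.trans hV')
    equityMap_nonneg hdown

theorem clearingMap_apply (i : ι) :
    clearingMap α β γ e l P Th b p V i =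
      payment (b i) (totalAssets e P Th p V i) (recoveredAssets α β γ e P Th p V i) (l i) := by
  simp only [clearingMap, payment]
  split_ifs <;> ring

theorem clearingMap_mem_Icc (hα : α ∈ Set.Icc (0 : ℝ) 1) (hβ : β ∈ Set.Icc (0 : ℝ) 1)
    (hγ : γ ∈ Set.Icc (0 : ℝ) 1) (he : 0 ≤ e) (hl : 0 ≤ l) (hP : ∀ i j, 0 ≤ P i j)
    (hTh : ∀ i j, 0 ≤ Th i j) (hp : 0 ≤ p) (hV : 0 ≤ V) :
    clearingMap α β γ e l P Th b p V ∈ Set.Icc 0 l := by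
  have hy := recoveredAssets_nonneg hα.1 hβ.1 hγ.1 he hP hTh hp hV
  have hyx := recoveredAssets_le_totalAssets hα.2 hβ.2 hγ.2 he hP hTh hp hV
  refine ⟨fun i => ?_, fun i => ?_⟩ <;> rw [clearingMap_apply]
  · exact le_payment (hy i) (hl i)
  · exact payment_le (hyx i)

theorem clearingMap_mono (hα : α ≤ 1) (hβ : β ∈ Set.Icc (0 : ℝ) 1)
    (hγ : γ ∈ Set.Icc (0 : ℝ) 1) (he : 0 ≤ e) (hP : ∀ i j, 0 ≤ P i j)
    (hTh : ∀ i j, 0 ≤ Th i j) (hp : 0 ≤ p) (hV : 0 ≤ V) (hb : b ≤ b') (hpp' : p ≤ p')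
    (hVV' : V ≤ V') :
    clearingMap α β γ e l P Th b p V ≤ clearingMap α β γ e l P Th b' p' V' := by
  have hyx := recoveredAssets_le_totalAssets hα hβ.2 hγ.2 he hP hTh hp hV
  have hx := totalAssets_mono (e := e) hP hTh hpp' hVV'
  have hy := recoveredAssets_mono (α := α) (e := e) hβ.1 hγ.1 hP hTh hpp' hVV'
  intro i
  simp only [clearingMap_apply]
  exact (payment_mono_assets (hyx i) (hx i) (hy i)).trans (payment_mono_flag (hb i))

theorem stmt5_general (he : 0 ≤ e) (hl : 0 ≤ l) (hP : ∀ i j, 0 ≤ P i j)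
    (hTh : ∀ i j, 0 ≤ Th i j) (hα : α ∈ Set.Icc (0 : ℝ) 1) (hβ : β ∈ Set.Icc (0 : ℝ) 1)
    (hγ : γ ∈ Set.Icc (0 : ℝ) 1) {H : (ι → ℝ) → ι → ℝ}
    (hH : ∀ u ∈ Set.Icc 0 l, IsLeast (Function.fixedPoints (equityMap e l P Th u)) (H u)) :
    (∀ (b : ι → Bool) (p : ι → ℝ),
      p ∈ Set.Icc 0 l → clearingMap α β γ e l P Th b p (H p) ∈ Set.Icc 0 l) ∧
    (∀ (b b' : ι → Bool) (p p' : ι → ℝ), p ∈ Set.Icc 0 l → p' ∈ Set.Icc 0 l → b ≤ b' → p ≤ p' →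
      clearingMap α β γ e l P Th b p (H p) ≤ clearingMap α β γ e l P Th b' p' (H p')) := by
  have hH_nonneg : ∀ p ∈ Set.Icc 0 l, 0 ≤ H p := fun p hp =>
    equityMap_nonneg.trans_eq (hH p hp).1
  refine ⟨fun b p hp => ?_, fun b b' p p' hp hp' hb hpp' => ?_⟩
  · exact clearingMap_mem_Icc hα hβ hγ he hl hP hTh hp.1 (hH_nonneg p hp)
  · have hH_mono : H p ≤ H p' :=
      le_of_equityMap_le hP hTh hpp' hp'.2 (hH p hp).2 (hH p' hp').1.le
    exact clearingMap_mono hα.2 hβ hγ he hP hTh hp.1 (hH_nonneg p hp) hb hpp' hH_mono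

end FinancialNetwork

/-- The map `(b,p) ↦ F_b(p)` maps `{0,1}^N × [0,l]` into `[0,l]` and is
monotone with respect to the componentwise orderings: if `b ≤ b'` in `{0,1}^N` and
`p ≤ p'` in `[0,l]`, then `F_b(p) ≤ F_{b'}(p')`. -/
theorem stmt5 (N : ℕ) (hN : 1 < N)
    (e l : Fin N → ℝ) (he : 0 ≤ e) (hl : 0 ≤ l)
    (P Th : Matrix (Fin N) (Fin N) ℝ)
    (hP : ∀ i j, 0 ≤ P i j) (hProw : ∀ i, ∑ j, P i j = 1)
    (hTh : ∀ i j, 0 ≤ Th i j) (hThrow : ∀ i, ∑ j, Th i j ≤ 1)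
    (α β γ : ℝ) (hα : α ∈ Set.Icc (0:ℝ) 1) (hβ : β ∈ Set.Icc (0:ℝ) 1)
    (hγ : γ ∈ Set.Icc (0:ℝ) 1)
    (Gp : (Fin N → ℝ) → (Fin N → ℝ) → Fin N → ℝ)
    (hGp : Gp = fun u V i =>
      max (e i + P.transpose.mulVec u i + Th.transpose.mulVec V i - l i) 0 *
        (if u i = l i then (1 : ℝ) else 0))
    (H : (Fin N → ℝ) → Fin N → ℝ)
    (hH : ∀ u ∈ Set.Icc (0 : Fin N → ℝ) l,
      H u = Gp u (H u) ∧ ∀ W : Fin N → ℝ, W = Gp u W → W = H u)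
    (F : (Fin N → Bool) → (Fin N → ℝ) → Fin N → ℝ)
    (hF : F = fun b p i =>
      let V := H p
      let xi := e i + P.transpose.mulVec p i + Th.transpose.mulVec V i
      let yi := α * e i + β * P.transpose.mulVec p i + γ * Th.transpose.mulVec V i
      let di : ℝ := if xi < l i then 1 else 0
      if b i then yi * di + l i * (1 - di) else min yi (l i)) :
    (∀ (b : Fin N → Bool) (p : Fin N → ℝ),
      p ∈ Set.Icc (0 : Fin N → ℝ) l → F b p ∈ Set.Icc (0 : Fin N → ℝ) l) ∧
    (∀ (b b' : Fin N → Bool) (p p' : Fin N → ℝ),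
      p ∈ Set.Icc (0 : Fin N → ℝ) l → p' ∈ Set.Icc (0 : Fin N → ℝ) l →
      b ≤ b' → p ≤ p' → F b p ≤ F b' p') := by
  subst hGp hF
  exact stmt5_general he hl hP hTh hα hβ hγ fun u hu =>
    ⟨(hH u hu).1.symm, fun W hW => ((hH u hu).2 W hW.symm).ge⟩
end

section
/- If (p,V) is a clearing pair with V ≤ κ·1 componentwise, then the triple (1_{p=l}, p, V) is admissible for problem P1. -/
open Matrix

/-!
Let `a` be the indicator of `p = l`. Absolute priority gives `p ≤ y + a ∘ l`, at once where `p = y`,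
and by `0 ≤ y` where `p = l`. Since `a ∘ l ≤ p ≤ x` and equity is either `x - p` or `0`, we get
`V ≤ x - p ≤ x - a ∘ l`. Finally `V` vanishes wherever `a` does, so `V ≤ κ` improves to `V ≤ κ a`.
-/

variable {ι R : Type*}

/-- The 0–1 vector `1_{u = w}`, equal to `1` at exactly the coordinates where `u` and `w` agree. -/
def eqIndicator [Zero R] [One R] [DecidableEq R] (u w : ι → R) : ι → R :=
  fun i => if u i = w i then 1 else 0

section EqIndicator

variable [DecidableEq R] {u w : ι → R} {i : ι}

lemma eqIndicator_apply_of_eq [Zero R] [One R] (h : u i = w i) : eqIndicator u w i = 1 :=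
  if_pos h

lemma eqIndicator_apply_of_ne [Zero R] [One R] (h : u i ≠ w i) : eqIndicator u w i = 0 :=
  if_neg h

lemma eqIndicator_apply_eq_zero_or_one [Zero R] [One R] (u w : ι → R) (i : ι) :
    eqIndicator u w i = 0 ∨ eqIndicator u w i = 1 :=
  (ite_eq_or_eq _ _ _).symm

lemma eqIndicator_mul_le [MulZeroOneClass R] [Preorder R] (hu : 0 ≤ u) :
    eqIndicator u w * w ≤ u := by
  intro i
  by_cases h : u i = w i
  · simp [eqIndicator_apply_of_eq h, h]
  · simpa [eqIndicator_apply_of_ne h] using hu i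

end EqIndicator

/-- Clearing pairs `(p, V)` of payments and equity values, for liabilities `l`. The maps `x` and `y`
give the assets available to each firm when it is solvent and when it defaults; they are arbitrary
here, so that the notion does not depend on the form of the cross-holdings. -/
structure IsClearingPair [AddGroup R] [Preorder R]
    (x y : (ι → R) → (ι → R) → ι → R) (l p V : ι → R) : Prop where
  payment_mem_Icc : p ∈ Set.Icc 0 l
  equity_nonneg : 0 ≤ V
  limited_liability : p ≤ x p V
  absolute_priority : ∀ i, p i = l i ∨ p i = y p V i
  equity_evaluation : ∀ i, (p i = l i → V i = x p V i - p i) ∧ (p i ≠ l i → V i = 0)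

/-- Admissibility of `(a, p, V)` for the mixed-integer problem P1, whose binary vector `a` marks the
solvent firms. The maps `x` and `y` are as in `IsClearingPair`, and the Hadamard product `a ∘ l`
is the pointwise product `a * l`. -/
structure IsAdmissibleP1 [NonAssocRing R] [Preorder R]
    (x y : (ι → R) → (ι → R) → ι → R) (l : ι → R) (κ : R) (a p V : ι → R) : Prop where
  binary : ∀ i, a i = 0 ∨ a i = 1
  payment_mem_Icc : p ∈ Set.Icc 0 l
  equity_nonneg : 0 ≤ V
  payment_le : p ≤ y p V + a * l
  liability_le : a * l ≤ x p V
  equity_le : V ≤ x p V - a * l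
  equity_le_bound : ∀ i, V i ≤ κ * a i

namespace IsClearingPair

variable {x y : (ι → R) → (ι → R) → ι → R} {l p V : ι → R}

lemma equity_le_sub_payment [AddGroup R] [Preorder R] [AddRightMono R]
    (h : IsClearingPair x y l p V) : V ≤ x p V - p := by
  intro i
  by_cases hi : p i = l i
  · exact ((h.equity_evaluation i).1 hi).le
  · exact ((h.equity_evaluation i).2 hi).trans_le (sub_nonneg.2 (h.limited_liability i))

variable [NonAssocRing R] [DecidableEq R]

lemma payment_le_add_eqIndicator_mul [Preorder R] [IsOrderedAddMonoid R]
    (h : IsClearingPair x y l p V) (hy : 0 ≤ y p V) :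
    p ≤ y p V + eqIndicator p l * l := by
  intro i
  by_cases hi : p i = l i
  · simpa [eqIndicator_apply_of_eq hi, hi] using hy i
  · simpa [eqIndicator_apply_of_ne hi] using ((h.absolute_priority i).resolve_left hi).le

lemma equity_le_mul_eqIndicator [Preorder R] (h : IsClearingPair x y l p V) {κ : R}
    (hV : ∀ i, V i ≤ κ) (i : ι) : V i ≤ κ * eqIndicator p l i := by
  by_cases hi : p i = l i
  · simpa [eqIndicator_apply_of_eq hi] using hV i
  · simp [eqIndicator_apply_of_ne hi, (h.equity_evaluation i).2 hi]

end IsClearingPair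

lemma mulVec_nonneg {m n : Type*} [Fintype n] [Semiring R] [PartialOrder R]
    [IsOrderedRing R] {A : Matrix m n R} {v : n → R}
    (hA : ∀ i j, 0 ≤ A i j) (hv : 0 ≤ v) : 0 ≤ A *ᵥ v :=
  fun i => dotProduct_nonneg_of_nonneg (hA i) hv

section LinearValuation

variable [Fintype ι] [Semiring R]

/-- The paper's `x(p, V)`: endowments, payments received under the relative liabilities `P`, and
equity held under the cross-holdings `Θ`. -/
def assetValue (e : ι → R) (P Θ : Matrix ι ι R) (p V : ι → R) : ι → R :=
  e + Pᵀ *ᵥ p + Θᵀ *ᵥ V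

/-- The paper's `y(p, V)`: the assets recovered in default, where only the fractions `α`, `β`, `γ`
of the three summands of `assetValue` remain. -/
def recoveryValue (e : ι → R) (P Θ : Matrix ι ι R) (α β γ : R) (p V : ι → R) : ι → R :=
  α • e + β • (Pᵀ *ᵥ p) + γ • (Θᵀ *ᵥ V)

lemma recoveryValue_nonneg [PartialOrder R] [IsOrderedRing R]
    {e p V : ι → R} {P Θ : Matrix ι ι R} {α β γ : R}
    (he : 0 ≤ e) (hP : ∀ i j, 0 ≤ P i j) (hΘ : ∀ i j, 0 ≤ Θ i j)
    (hα : 0 ≤ α) (hβ : 0 ≤ β) (hγ : 0 ≤ γ) (hp : 0 ≤ p) (hV : 0 ≤ V) :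
    0 ≤ recoveryValue e P Θ α β γ p V :=
  add_nonneg
    (add_nonneg (smul_nonneg hα he) (smul_nonneg hβ (mulVec_nonneg (fun i j => hP j i) hp)))
    (smul_nonneg hγ (mulVec_nonneg (fun i j => hΘ j i) hV))

end LinearValuation

theorem stmt9_general [NonAssocRing R] [Preorder R] [IsOrderedAddMonoid R] [DecidableEq R]
    {x y : (ι → R) → (ι → R) → ι → R} {l p V : ι → R} {κ : R}
    (h : IsClearingPair x y l p V) (hy : 0 ≤ y p V) (hV : ∀ i, V i ≤ κ) :
    IsAdmissibleP1 x y l κ (eqIndicator p l) p V where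
  binary := eqIndicator_apply_eq_zero_or_one p l
  payment_mem_Icc := h.payment_mem_Icc
  equity_nonneg := h.equity_nonneg
  payment_le := h.payment_le_add_eqIndicator_mul hy
  liability_le := (eqIndicator_mul_le h.payment_mem_Icc.1).trans h.limited_liability
  equity_le := h.equity_le_sub_payment.trans
    (sub_le_sub_left (eqIndicator_mul_le h.payment_mem_Icc.1) _)
  equity_le_bound := h.equity_le_mul_eqIndicator hV

/-- If `(p,V)` is a clearing pair with `V ≤ κ·1` componentwise, then the
triple `(1_{p=l}, p, V)` is admissible for problem P1. -/
theorem stmt9 (N : ℕ) (hN : 1 < N)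
    (e l : Fin N → ℝ) (he : 0 ≤ e) (hl : 0 ≤ l)
    (P Th : Matrix (Fin N) (Fin N) ℝ)
    (hP : ∀ i j, 0 ≤ P i j) (hProw : ∀ i, ∑ j, P i j = 1)
    (hTh : ∀ i j, 0 ≤ Th i j) (hThrow : ∀ i, ∑ j, Th i j ≤ 1)
    (α β γ : ℝ) (hα : α ∈ Set.Icc (0:ℝ) 1) (hβ : β ∈ Set.Icc (0:ℝ) 1)
    (hγ : γ ∈ Set.Icc (0:ℝ) 1)
    (hInv : IsUnit (1 - Th.transpose))
    (hInvNonneg : ∀ i j, 0 ≤ (1 - Th.transpose)⁻¹ i j)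
    (K : Fin N → ℝ)
    (hK : K = (1 - Th.transpose)⁻¹.mulVec
      (fun i => max (e i + P.transpose.mulVec l i - l i) 0))
    (κ : ℝ) (hκ : κ = ⨆ i, K i)
    -- admissibility for problem P1
    (Adm1 : (Fin N → ℝ) → (Fin N → ℝ) → (Fin N → ℝ) → Prop)
    (hAdm1 : ∀ a p V : Fin N → ℝ, Adm1 a p V ↔
      ((∀ i, a i = 0 ∨ a i = 1) ∧ p ∈ Set.Icc (0 : Fin N → ℝ) l ∧ 0 ≤ V ∧
      (∀ i, p i ≤ α * e i + β * P.transpose.mulVec p i + γ * Th.transpose.mulVec V i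
        + a i * l i) ∧
      (∀ i, a i * l i ≤ e i + P.transpose.mulVec p i + Th.transpose.mulVec V i) ∧
      (∀ i, V i ≤ e i + P.transpose.mulVec p i + Th.transpose.mulVec V i - a i * l i) ∧
      (∀ i, V i ≤ κ * a i)))
    (p V : Fin N → ℝ)
    -- `(p,V)` is a clearing pair
    (hpIcc : p ∈ Set.Icc (0 : Fin N → ℝ) l) (hV : 0 ≤ V)
    (hLL : ∀ i, p i ≤ e i + P.transpose.mulVec p i + Th.transpose.mulVec V i)
    (hAP : ∀ i, p i = l i ∨
      p i = α * e i + β * P.transpose.mulVec p i + γ * Th.transpose.mulVec V i)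
    (hEE : ∀ i,
      (p i = l i → V i = e i + P.transpose.mulVec p i + Th.transpose.mulVec V i - p i) ∧
      (p i ≠ l i → V i = 0))
    (hVκ : ∀ i, V i ≤ κ) :
    Adm1 (fun i => if p i = l i then (1 : ℝ) else 0) p V := by
  have h := stmt9_general (x := assetValue e P Th) (y := recoveryValue e P Th α β γ)
    ⟨hpIcc, hV, hLL, hAP, hEE⟩
    (recoveryValue_nonneg he hP hTh hα.1 hβ.1 hγ.1 hpIcc.1 hV) hVκ
  exact (hAdm1 _ p V).2 ⟨h.binary, h.payment_mem_Icc, h.equity_nonneg, h.payment_le,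
    h.liability_le, h.equity_le, h.equity_le_bound⟩
end
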